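/- arXiv:1907.02115 — 5 statements merged into one kernel-verified Lean document; each statement's English description precedes it below -/
import Mathlib

section
/- The dimension of S_c as a real vector space equals 2n − 1. -/
/-- The subspace `S_c` of matrices of the form `x_{ij} = (w_i + w̃_j)/c_{ij}`. -/
def Sc (n : ℕ) (c : Fin n → Fin n → ℝ) : Set (Fin n → Fin n → ℝ) :=
  {x | ∃ w wt : Fin n → ℝ, ∀ i j, x i j = (w i + wt j) / c i j}

/-!
`S_c` is the image of the linear map `(w, w̃) ↦ ((w_i + w̃_j) / c_{ij})`. Its kernel is the line
spanned by `(1, -1)`: if `w_i + w̃_j = 0` for all `i, j`, then all the `w_i` equal a common value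
`a` and all the `w̃_j` equal `-a`. Rank-nullity concludes.
-/

section DivSum

variable {ι κ K : Type*} [DivisionRing K]

/-- The linear parametrization `(w, w̃) ↦ ((w_i + w̃_j) / c_{ij})` of the space `S_c`, for
rectangular `c` with entries in a division ring acting on vectors and matrices from the left. -/
def divSum (c : ι → κ → K) : (ι → K) × (κ → K) →ₗ[K] ι → κ → K where
  toFun p i j := (p.1 i + p.2 j) / c i j
  map_add' p q := by
    funext i j
    simp only [Prod.fst_add, Prod.snd_add, Pi.add_apply, ← add_div, add_add_add_comm]
  map_smul' r p := by
    funext i j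
    simp only [Prod.smul_fst, Prod.smul_snd, Pi.smul_apply, smul_eq_mul, RingHom.id_apply,
      ← mul_add, mul_div_assoc]

theorem divSum_apply (c : ι → κ → K) (p : (ι → K) × (κ → K)) (i : ι) (j : κ) :
    divSum c p i j = (p.1 i + p.2 j) / c i j :=
  rfl

theorem coe_range_divSum (c : ι → κ → K) :
    (LinearMap.range (divSum c) : Set (ι → κ → K)) =
      {x | ∃ (w : ι → K) (wt : κ → K), ∀ i j, x i j = (w i + wt j) / c i j} := by
  ext x
  simp only [SetLike.mem_coe, LinearMap.mem_range, Prod.exists, Set.mem_ofPred_eq, funext_iff,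
    divSum_apply, eq_comm]

theorem mem_ker_divSum {c : ι → κ → K} (hc : ∀ i j, c i j ≠ 0) {p : (ι → K) × (κ → K)} :
    p ∈ LinearMap.ker (divSum c) ↔ ∀ i j, p.1 i + p.2 j = 0 := by
  simp only [LinearMap.mem_ker, funext_iff, divSum_apply, Pi.zero_apply, div_eq_zero_iff, hc,
    or_false]

theorem forall_add_eq_zero_iff_mem_span [Nonempty ι] [Nonempty κ] {p : (ι → K) × (κ → K)} :
    (∀ i j, p.1 i + p.2 j = 0) ↔ p ∈ Submodule.span K {((1, -1) : (ι → K) × (κ → K))} := by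
  rw [Submodule.mem_span_singleton]
  constructor
  · intro add_eq_zero
    obtain ⟨i₀⟩ := ‹Nonempty ι›
    obtain ⟨j₀⟩ := ‹Nonempty κ›
    have fst_eq (i : ι) : p.1 i₀ = p.1 i :=
      add_right_cancel ((add_eq_zero i₀ j₀).trans (add_eq_zero i j₀).symm)
    have snd_eq (j : κ) : -p.1 i₀ = p.2 j := neg_eq_of_add_eq_zero_right (add_eq_zero i₀ j)
    refine ⟨p.1 i₀, Prod.ext (funext fun i => ?_) (funext fun j => ?_)⟩
    · simpa using fst_eq i
    · simpa using snd_eq j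
  · rintro ⟨a, rfl⟩ i j
    simp

theorem finrank_ker_divSum [Nonempty ι] [Nonempty κ] {c : ι → κ → K} (hc : ∀ i j, c i j ≠ 0) :
    Module.finrank K (LinearMap.ker (divSum c)) = 1 := by
  have ker_eq : LinearMap.ker (divSum c) = Submodule.span K {(1, -1)} :=
    Submodule.ext fun _ => (mem_ker_divSum hc).trans forall_add_eq_zero_iff_mem_span
  have generator_ne_zero : ((1, -1) : (ι → K) × (κ → K)) ≠ 0 := by simp
  rw [ker_eq, finrank_span_singleton generator_ne_zero]

theorem finrank_range_divSum_add_one [Fintype ι] [Fintype κ] [Nonempty ι] [Nonempty κ]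
    {c : ι → κ → K} (hc : ∀ i j, c i j ≠ 0) :
    Module.finrank K (LinearMap.range (divSum c)) + 1 = Fintype.card ι + Fintype.card κ := by
  rw [← finrank_ker_divSum hc, LinearMap.finrank_range_add_finrank_ker, Module.finrank_prod,
    Module.finrank_fintype_fun_eq_card, Module.finrank_fintype_fun_eq_card]

theorem stmt4_general [Fintype ι] [Fintype κ] [Nonempty ι] [Nonempty κ]
    (c : ι → κ → K) (hc : ∀ i j, c i j ≠ 0) (S : Submodule K (ι → κ → K))
    (hS : (S : Set (ι → κ → K)) =
      {x | ∃ (w : ι → K) (wt : κ → K), ∀ i j, x i j = (w i + wt j) / c i j}) :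
    Module.finrank K S = Fintype.card ι + Fintype.card κ - 1 := by
  obtain rfl : S = LinearMap.range (divSum c) :=
    SetLike.coe_injective (hS.trans (coe_range_divSum c).symm)
  exact Nat.eq_sub_of_add_eq (finrank_range_divSum_add_one hc)

end DivSum

/-- the dimension of `S_c` as a real vector space equals `2n − 1`. -/
theorem stmt4 {n : ℕ} (hn : 1 ≤ n) (c : Fin n → Fin n → ℝ) (hc : ∀ i j, 0 < c i j)
    (S : Submodule ℝ (Fin n → Fin n → ℝ)) (hS : (S : Set (Fin n → Fin n → ℝ)) = Sc n c) :
    Module.finrank ℝ S = 2 * n - 1 := by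
  have : Nonempty (Fin n) := ⟨⟨0, hn⟩⟩
  simpa only [Fintype.card_fin, two_mul] using stmt4_general c (fun i j => (hc i j).ne') S hS
end

section
/- If v is a real n×n matrix with ⟨v, s⟩_c = 0 for every s ∈ S_c, then v lies in the linear span of {B_{ij} : i,j ∈ [n−1]}; thus the matrices B_{ij} form a basis of the c-orthogonal complement of S_c. -/
/-- The weighted inner product `⟨x,y⟩_c = Σ_{i,j} c_{ij} x_{ij} y_{ij}`. -/
def cinner {n : ℕ} (c x y : Fin n → Fin n → ℝ) : ℝ :=
  ∑ i, ∑ j, c i j * x i j * y i j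

/-- `B_{ij}`: the `n×n` matrix with entry `1` at positions `(i,j)` and `(n,n)`,
entry `−1` at positions `(i,n)` and `(n,j)`, `0` elsewhere. -/
def Bmat (n : ℕ) (i j : Fin (n - 1)) : Fin n → Fin n → ℝ :=
  fun k l =>
    (if k.val = i.val ∧ l.val = j.val then 1 else 0)
      + (if k.val = n - 1 ∧ l.val = n - 1 then 1 else 0)
      - (if k.val = i.val ∧ l.val = n - 1 then 1 else 0)
      - (if k.val = n - 1 ∧ l.val = j.val then 1 else 0)

/-!
Since the weights cancel against the denominators of `S_c`, the pairing `⟨v, (w + w̃) / c⟩_c` is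
`∑ᵢ (row sum of v)ᵢ wᵢ + ∑ⱼ (column sum of v)ⱼ w̃ⱼ`, so `v` is `c`-orthogonal to `S_c` exactly when
all its row and column sums vanish. A vector `u` with zero sum is `∑ᵢ uᵢ (eᵢ - eₙ)`, the sum running
over `i < n`. Applied to the columns and then to the rows of such a `v`, this gives
`v = ∑ᵢⱼ vᵢⱼ (eᵢ - eₙ) ⊗ (eⱼ - eₙ) = ∑ᵢⱼ vᵢⱼ Bᵢⱼ`.
-/

section ZeroMarginals

variable (R ι κ : Type*) [Semiring R] [Fintype ι] [Fintype κ]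

/-- The matrices all of whose row sums and column sums vanish. They are the orthogonal complement of
`S_c`, described without reference to the weights. -/
def zeroMarginals : Submodule R (ι → κ → R) where
  carrier := {v | (∀ i, ∑ j, v i j = 0) ∧ ∀ j, ∑ i, v i j = 0}
  zero_mem' := by simp
  add_mem' hv hv' := by simp_all [Finset.sum_add_distrib]
  smul_mem' a v hv := by simp_all [← Finset.mul_sum]

variable {R ι κ}

theorem mem_zeroMarginals {v : ι → κ → R} :
    v ∈ zeroMarginals R ι κ ↔ (∀ i, ∑ j, v i j = 0) ∧ ∀ j, ∑ i, v i j = 0 :=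
  Iff.rfl

theorem sum_sum_mul_add (v : ι → κ → R) (w : ι → R) (w' : κ → R) :
    ∑ i, ∑ j, v i j * (w i + w' j) =
      ∑ i, (∑ j, v i j) * w i + ∑ j, (∑ i, v i j) * w' j := by
  simp only [mul_add, Finset.sum_add_distrib, Finset.sum_mul]
  rw [Finset.sum_comm (f := fun i j => v i j * w' j)]

theorem mem_zeroMarginals_iff_forall_sum_sum_mul_add {v : ι → κ → R} :
    v ∈ zeroMarginals R ι κ ↔
      ∀ (w : ι → R) (w' : κ → R), ∑ i, ∑ j, v i j * (w i + w' j) = 0 := by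
  classical
  simp only [sum_sum_mul_add, mem_zeroMarginals]
  refine ⟨fun ⟨hrow, hcol⟩ w w' => by simp [hrow, hcol], fun h => ⟨fun i => ?_, fun j => ?_⟩⟩
  · simpa [Pi.single_apply] using h (Pi.single i 1) 0
  · simpa [Pi.single_apply] using h 0 (Pi.single j 1)

theorem mul_mem_zeroMarginals {a : ι → R} {b : κ → R} (ha : ∑ i, a i = 0) (hb : ∑ j, b j = 0) :
    (fun i j => a i * b j) ∈ zeroMarginals R ι κ := by
  simp [mem_zeroMarginals, ← Finset.mul_sum, ← Finset.sum_mul, ha, hb]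

end ZeroMarginals

section SingleSubLast

variable (R : Type*) [Ring R] {m : ℕ}

/-- The vector `eᵢ - eₙ` of length `n = m + 1`, for `i < n`. These vectors span the vectors with
zero sum, and their outer products are the matrices `Bᵢⱼ`. -/
def singleSubLast (i : Fin m) : Fin (m + 1) → R :=
  Pi.single i.castSucc 1 - Pi.single (Fin.last m) 1

variable {R}

theorem sum_singleSubLast (i : Fin m) : ∑ k, singleSubLast R i k = 0 := by
  simp [singleSubLast]

theorem sum_mul_singleSubLast {u : Fin (m + 1) → R} (hu : ∑ k, u k = 0) (k : Fin (m + 1)) :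
    ∑ i : Fin m, u i.castSucc * singleSubLast R i k = u k := by
  rw [Fin.sum_univ_castSucc] at hu
  cases k using Fin.lastCases with
  | last => simp [singleSubLast, eq_neg_of_add_eq_zero_left hu]
  | cast k => simp [singleSubLast, Pi.single_apply]

theorem sum_sum_mul_singleSubLast {v : Fin (m + 1) → Fin (m + 1) → R}
    (hv : v ∈ zeroMarginals R (Fin (m + 1)) (Fin (m + 1))) (k l : Fin (m + 1)) :
    ∑ j : Fin m, (∑ i : Fin m, v i.castSucc j.castSucc * singleSubLast R i k) *
      singleSubLast R j l = v k l := by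
  obtain ⟨hrow, hcol⟩ := mem_zeroMarginals.1 hv
  calc
    _ = ∑ j : Fin m, v k j.castSucc * singleSubLast R j l := by
      simp only [fun j => sum_mul_singleSubLast (hcol j) k]
    _ = v k l := sum_mul_singleSubLast (hrow k) l

end SingleSubLast

theorem Bmat_eq_mul_singleSubLast {m : ℕ} (i j : Fin m) :
    Bmat (m + 1) i j = fun k l => singleSubLast ℝ i k * singleSubLast ℝ j l := by
  ext k l
  simp only [Bmat, singleSubLast, Pi.sub_apply, Pi.single_apply, Fin.ext_iff, Fin.val_castSucc,
    Fin.val_last, Nat.add_sub_cancel, ite_and]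
  split_ifs <;> norm_num

theorem Bmat_mem_zeroMarginals {m : ℕ} (i j : Fin m) :
    Bmat (m + 1) i j ∈ zeroMarginals ℝ (Fin (m + 1)) (Fin (m + 1)) := by
  rw [Bmat_eq_mul_singleSubLast]
  exact mul_mem_zeroMarginals (sum_singleSubLast i) (sum_singleSubLast j)

theorem sum_smul_Bmat {m : ℕ} {v : Fin (m + 1) → Fin (m + 1) → ℝ}
    (hv : v ∈ zeroMarginals ℝ (Fin (m + 1)) (Fin (m + 1))) :
    ∑ j : Fin m, ∑ i : Fin m, v i.castSucc j.castSucc • Bmat (m + 1) i j = v := by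
  ext k l
  simpa [Bmat_eq_mul_singleSubLast, Finset.sum_mul, mul_assoc] using
    sum_sum_mul_singleSubLast hv k l

theorem span_range_Bmat (m : ℕ) :
    Submodule.span ℝ (Set.range fun p : Fin m × Fin m => Bmat (m + 1) p.1 p.2) =
      zeroMarginals ℝ (Fin (m + 1)) (Fin (m + 1)) := by
  apply le_antisymm
  · rw [Submodule.span_le, Set.range_subset_iff]
    exact fun p => Bmat_mem_zeroMarginals p.1 p.2
  · intro v hv
    rw [← sum_smul_Bmat hv]
    exact Submodule.sum_mem _ fun j _ => Submodule.sum_mem _ fun i _ =>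
      Submodule.smul_mem _ _ (Submodule.subset_span ⟨(i, j), rfl⟩)

section Orthogonality

variable {n : ℕ} {c : Fin n → Fin n → ℝ}

theorem cinner_add_div (hc : ∀ i j, c i j ≠ 0) (v : Fin n → Fin n → ℝ) (w w' : Fin n → ℝ) :
    cinner c v (fun i j => (w i + w' j) / c i j) = ∑ i, ∑ j, v i j * (w i + w' j) := by
  refine Finset.sum_congr rfl fun i _ => Finset.sum_congr rfl fun j _ => ?_
  field_simp [hc i j]

theorem forall_mem_Sc {P : (Fin n → Fin n → ℝ) → Prop} :
    (∀ s ∈ Sc n c, P s) ↔ ∀ w w' : Fin n → ℝ, P fun i j => (w i + w' j) / c i j := by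
  simp only [Sc, Set.mem_ofPred_eq, ← funext_iff]
  exact ⟨fun h w w' => h _ ⟨w, w', rfl⟩, fun h s ⟨w, w', hs⟩ => hs ▸ h w w'⟩

theorem forall_mem_Sc_cinner_eq_zero_iff (hc : ∀ i j, c i j ≠ 0) {v : Fin n → Fin n → ℝ} :
    (∀ s ∈ Sc n c, cinner c v s = 0) ↔ v ∈ zeroMarginals ℝ (Fin n) (Fin n) := by
  simp only [forall_mem_Sc, cinner_add_div hc, mem_zeroMarginals_iff_forall_sum_sum_mul_add]

end Orthogonality

theorem stmt7_general {n : ℕ} (hn : n ≠ 0) (c : Fin n → Fin n → ℝ) (hc : ∀ i j, c i j ≠ 0) :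
    (Submodule.span ℝ (Set.range fun p : Fin (n - 1) × Fin (n - 1) => Bmat n p.1 p.2) :
        Set (Fin n → Fin n → ℝ)) = {v | ∀ s ∈ Sc n c, cinner c v s = 0} := by
  obtain ⟨m, rfl⟩ := Nat.exists_eq_succ_of_ne_zero hn
  ext v
  rw [Set.mem_ofPred_eq, forall_mem_Sc_cinner_eq_zero_iff hc]
  exact SetLike.ext_iff.1 (span_range_Bmat m) v

/-- every matrix `v` that is `c`-orthogonal to all of `S_c` lies in the span of
the `B_{ij}`; thus the `B_{ij}` span (and, being linearly independent, form a basis of) the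
`c`-orthogonal complement of `S_c`. -/
theorem stmt7 {n : ℕ} (hn : 2 ≤ n) (c : Fin n → Fin n → ℝ) (hc : ∀ i j, 0 < c i j) :
    (∀ v : Fin n → Fin n → ℝ, (∀ s ∈ Sc n c, cinner c v s = 0) →
      v ∈ Submodule.span ℝ (Set.range fun p : Fin (n - 1) × Fin (n - 1) => Bmat n p.1 p.2)) ∧
    (Submodule.span ℝ (Set.range fun p : Fin (n - 1) × Fin (n - 1) => Bmat n p.1 p.2) :
        Set (Fin n → Fin n → ℝ)) = {v | ∀ s ∈ Sc n c, cinner c v s = 0} :=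
  have span_eq := stmt7_general (by omega) c fun i j => (hc i j).ne'
  ⟨fun _ hv => span_eq.ge hv, span_eq⟩
end

section
/- For every choice of x_1,…,x_{n−1}, y_1,…,y_{n−1}, z ∈ ℝ, the matrix v satisfies ⟨v, B_{11}⟩_c = c_{11} and ⟨v, B_{kl}⟩_c = 0 for all (k,l) ∈ [n−1]×[n−1] with (k,l) ≠ (1,1); equivalently, e_{11} − v is c-orthogonal to B_{kl} for every k,l ∈ [n−1], where e_{11} is the matrix with entry 1 at position (1,1) and 0 elsewhere. -/
/-- The candidate projection-error matrix `v = (e_{11})_{⊥S_c}` built from the parameters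
`x_1,…,x_{n−1}, y_1,…,y_{n−1}, z`:
`v_{kl} = (−z − x_k − y_l)/c_{kl}` for `k,l ∈ [n−1]` (with an extra `+1` at `(1,1)`),
`v_{kn} = −x_k/c_{kn}`, `v_{nl} = −y_l/c_{nl}`, `v_{nn} = z/c_{nn}`. -/
noncomputable def Vmat (n : ℕ) (c : Fin n → Fin n → ℝ) (x y : Fin (n - 1) → ℝ) (z : ℝ) :
    Fin n → Fin n → ℝ :=
  fun k l =>
    if hk : k.val < n - 1 then
      if hl : l.val < n - 1 then
        (if k.val = 0 ∧ l.val = 0 then 1 else 0) + (-z - x ⟨k.val, hk⟩ - y ⟨l.val, hl⟩) / c k l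
      else -x ⟨k.val, hk⟩ / c k l
    else
      if hl : l.val < n - 1 then -y ⟨l.val, hl⟩ / c k l
      else z / c k l

/-!
Let `ξ` and `η` extend `x` and `y` by the entry `-z` at the last index. Then the four cases in
the definition of `v` merge into the single formula `c_{ij} (e₁₁ - v)_{ij} = z + ξ_i + η_j`, a
function of `i` plus a function of `j`. Since `B_{kl}` is the outer product of `e_k - e_n` and
`e_l - e_n`, its row and column sums vanish, so it annihilates every such sum. Hence `e₁₁ - v` is
`c`-orthogonal to `B_{kl}`, and `⟨v, B_{kl}⟩_c = ⟨e₁₁, B_{kl}⟩_c` is `c₁₁` times the first entry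
of `B_{kl}`.
-/

theorem sum_sum_add_mul_eq_zero {ι κ R : Type*} [Fintype ι] [Fintype κ]
    [NonUnitalNonAssocSemiring R] (r : ι → R) (s : κ → R) {B : ι → κ → R}
    (hrow : ∀ i, ∑ j, B i j = 0) (hcol : ∀ j, ∑ i, B i j = 0) :
    ∑ i, ∑ j, (r i + s j) * B i j = 0 := by
  have hr : ∑ i, ∑ j, r i * B i j = 0 := by
    simp only [← Finset.mul_sum, hrow, mul_zero, Finset.sum_const_zero]
  have hs : ∑ i, ∑ j, s j * B i j = 0 := by
    rw [Finset.sum_comm]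
    simp only [← Finset.mul_sum, hcol, mul_zero, Finset.sum_const_zero]
  simp only [add_mul, Finset.sum_add_distrib, hr, hs, add_zero]

section WeightedInner

variable {n : ℕ} {c : Fin n → Fin n → ℝ}

theorem cinner_sub_left (v w B : Fin n → Fin n → ℝ) :
    cinner c (v - w) B = cinner c v B - cinner c w B := by
  simp only [cinner, Pi.sub_apply, mul_sub, sub_mul, Finset.sum_sub_distrib]

theorem cinner_eq_zero_of_mul_eq_add {w B : Fin n → Fin n → ℝ} {r s : Fin n → ℝ}
    (hw : ∀ i j, c i j * w i j = r i + s j)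
    (hrow : ∀ i, ∑ j, B i j = 0) (hcol : ∀ j, ∑ i, B i j = 0) :
    cinner c w B = 0 := by
  simp only [cinner, hw]
  exact sum_sum_add_mul_eq_zero r s hrow hcol

/-- The matrix `e₁₁`, with entry `1` at the top left position and `0` elsewhere. Positions are
compared through their values, so that `n` may be `0`. -/
def firstUnit (n : ℕ) : Fin n → Fin n → ℝ :=
  fun i j => if i.val = 0 ∧ j.val = 0 then 1 else 0

theorem cinner_firstUnit (hn : 0 < n) (B : Fin n → Fin n → ℝ) :
    cinner c (firstUnit n) B = c ⟨0, hn⟩ ⟨0, hn⟩ * B ⟨0, hn⟩ ⟨0, hn⟩ := by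
  have hval (i : Fin n) : i.val = 0 ↔ i = ⟨0, hn⟩ := Fin.eq_mk_iff_val_eq.symm
  simp [cinner, firstUnit, hval, ite_and]

end WeightedInner

section Bmat

variable {n : ℕ}

/-- The vector `e_k - e_n`; the matrix `B_{kl}` is the outer product of two of these. -/
def subLast (k : Fin (n - 1)) : Fin n → ℝ :=
  fun i => (if i.val = k.val then 1 else 0) - (if i.val = n - 1 then 1 else 0)

theorem sum_ite_val_eq {R : Type*} [AddCommMonoid R] {a : ℕ} (ha : a < n) (b : R) :
    ∑ i : Fin n, (if i.val = a then b else 0) = b := by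
  have hval (i : Fin n) : i.val = a ↔ i = ⟨a, ha⟩ := Fin.eq_mk_iff_val_eq.symm
  simp [hval]

theorem sum_subLast (k : Fin (n - 1)) : ∑ i, subLast k i = 0 := by
  have hk : k.val < n := by omega
  have hlast : n - 1 < n := by omega
  simp only [subLast, Finset.sum_sub_distrib, sum_ite_val_eq hk, sum_ite_val_eq hlast, sub_self]

theorem Bmat_eq_subLast_mul_subLast (k l : Fin (n - 1)) (i j : Fin n) :
    Bmat n k l i j = subLast k i * subLast l j := by
  simp only [Bmat, subLast, ite_and]
  split_ifs <;> ring

theorem sum_Bmat_row (k l : Fin (n - 1)) (i : Fin n) : ∑ j, Bmat n k l i j = 0 := by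
  simp only [Bmat_eq_subLast_mul_subLast, ← Finset.mul_sum, sum_subLast, mul_zero]

theorem sum_Bmat_col (k l : Fin (n - 1)) (j : Fin n) : ∑ i, Bmat n k l i j = 0 := by
  simp only [Bmat_eq_subLast_mul_subLast, ← Finset.sum_mul, sum_subLast, zero_mul]

theorem Bmat_zero_zero (hn : 1 < n) (k l : Fin (n - 1)) :
    Bmat n k l ⟨0, by omega⟩ ⟨0, by omega⟩ = if k.val = 0 ∧ l.val = 0 then 1 else 0 := by
  have hlast : 0 ≠ n - 1 := by omega
  simp [Bmat, hlast, eq_comm]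

end Bmat

section Vmat

variable {n : ℕ} {c : Fin n → Fin n → ℝ}

/-- The extension of a vector indexed by `Fin (n - 1)` to `Fin n` by the value `a` at the last
index; `Fin.snoc` for an `n` that is not syntactically a successor. -/
def extendLast {α : Type*} (x : Fin (n - 1) → α) (a : α) : Fin n → α :=
  fun i => if h : i.val < n - 1 then x ⟨i.val, h⟩ else a

theorem mul_firstUnit_sub_Vmat (hn : 1 < n) {i j : Fin n} (hc : c i j ≠ 0)
    (x y : Fin (n - 1) → ℝ) (z : ℝ) :
    c i j * (firstUnit n - Vmat n c x y z) i j
      = (z + extendLast x (-z) i) + extendLast y (-z) j := by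
  by_cases hi : i.val < n - 1 <;> by_cases hj : j.val < n - 1
  all_goals
    simp only [Pi.sub_apply, firstUnit, Vmat, extendLast, hi, hj, dif_pos, dif_neg,
      not_false_eq_true]
  · field_simp
    ring
  all_goals
    rw [if_neg (by omega)]
    field_simp
    ring

theorem cinner_firstUnit_sub_Vmat_Bmat (hc : ∀ i j, c i j ≠ 0) (x y : Fin (n - 1) → ℝ) (z : ℝ)
    (k l : Fin (n - 1)) : cinner c (firstUnit n - Vmat n c x y z) (Bmat n k l) = 0 := by
  have hn : 1 < n := by have := k.isLt; omega
  exact cinner_eq_zero_of_mul_eq_add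
    (fun i j => mul_firstUnit_sub_Vmat hn (hc i j) x y z) (sum_Bmat_row k l) (sum_Bmat_col k l)

theorem cinner_Vmat_Bmat (hn : 1 < n) (hc : ∀ i j, c i j ≠ 0) (x y : Fin (n - 1) → ℝ) (z : ℝ)
    (k l : Fin (n - 1)) :
    cinner c (Vmat n c x y z) (Bmat n k l)
      = if k.val = 0 ∧ l.val = 0 then c ⟨0, by omega⟩ ⟨0, by omega⟩ else 0 := by
  have horth := cinner_firstUnit_sub_Vmat_Bmat hc x y z k l
  rw [cinner_sub_left, sub_eq_zero] at horth
  rw [← horth, cinner_firstUnit (by omega), Bmat_zero_zero hn, mul_ite, mul_one, mul_zero]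

end Vmat

theorem stmt8_general {n : ℕ} (hn : 1 < n) (c : Fin n → Fin n → ℝ) (hc : ∀ i j, c i j ≠ 0)
    (x y : Fin (n - 1) → ℝ) (z : ℝ) :
    cinner c (Vmat n c x y z) (Bmat n ⟨0, by omega⟩ ⟨0, by omega⟩)
        = c ⟨0, by omega⟩ ⟨0, by omega⟩ ∧
    (∀ k l : Fin (n - 1), (k.val ≠ 0 ∨ l.val ≠ 0) →
      cinner c (Vmat n c x y z) (Bmat n k l) = 0) ∧
    (∀ k l : Fin (n - 1),
      cinner c ((fun i j : Fin n => if i.val = 0 ∧ j.val = 0 then (1 : ℝ) else 0)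
          - Vmat n c x y z) (Bmat n k l) = 0) := by
  refine ⟨?_, fun k l hkl => ?_, cinner_firstUnit_sub_Vmat_Bmat hc x y z⟩
  · rw [cinner_Vmat_Bmat hn hc, if_pos ⟨rfl, rfl⟩]
  · rw [cinner_Vmat_Bmat hn hc, if_neg (by omega)]

/-- for every choice of the parameters, `⟨v, B_{11}⟩_c = c_{11}` and
`⟨v, B_{kl}⟩_c = 0` for `(k,l) ≠ (1,1)`; equivalently, `e_{11} − v` is `c`-orthogonal to
every `B_{kl}`, where `e_{11}` has entry `1` at `(1,1)` and `0` elsewhere. -/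
theorem stmt8 {n : ℕ} (hn : 2 ≤ n) (c : Fin n → Fin n → ℝ) (hc : ∀ i j, 0 < c i j)
    (x y : Fin (n - 1) → ℝ) (z : ℝ) :
    cinner c (Vmat n c x y z) (Bmat n ⟨0, by omega⟩ ⟨0, by omega⟩)
        = c ⟨0, by omega⟩ ⟨0, by omega⟩ ∧
    (∀ k l : Fin (n - 1), (k.val ≠ 0 ∨ l.val ≠ 0) →
      cinner c (Vmat n c x y z) (Bmat n k l) = 0) ∧
    (∀ k l : Fin (n - 1),
      cinner c ((fun i j : Fin n => if i.val = 0 ∧ j.val = 0 then (1 : ℝ) else 0)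
          - Vmat n c x y z) (Bmat n k l) = 0) := by
  exact stmt8_general hn c (fun i j => (hc i j).ne') x y z
end

section
/- Let q and q' be real n×n matrices, and let p, p' ∈ K_c satisfy ⟨q − p, y − p⟩_c ≤ 0 and ⟨q' − p', y − p'⟩_c ≤ 0 for all y ∈ K_c (so p and p' are the c-metric projections of q and q' onto K_c). If q ≠ p, then ‖q' − p'‖_c − ‖q − p‖_c ≤ [ (‖q'‖_c² − ‖q‖_c²) − (‖p'‖_c² − ‖p‖_c²) ] / (2 ‖q − p‖_c). -/
/-- The weighted norm `‖x‖_c = √⟨x,x⟩_c`. -/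
noncomputable def cnorm {n : ℕ} (c x : Fin n → Fin n → ℝ) : ℝ :=
  Real.sqrt (cinner c x x)

/-- The cone `K_c` of matrices of the form `x_{ij} = (w_i + w̃_j)/c_{ij}` with `w, w̃ ≥ 0`. -/
def Kc (n : ℕ) (c : Fin n → Fin n → ℝ) : Set (Fin n → Fin n → ℝ) :=
  {x | ∃ w wt : Fin n → ℝ, (∀ i, 0 ≤ w i) ∧ (∀ j, 0 ≤ wt j) ∧
    ∀ i j, x i j = (w i + wt j) / c i j}

/-!
Testing the variational inequality of a projection `p` of `q` onto a cone at `0` and at `2p` gives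
`⟨q - p, p⟩ = 0`, hence `‖q - p‖² = ‖q‖² - ‖p‖²`. The right-hand side of the bound is therefore
`(‖q' - p'‖² - ‖q - p‖²) / (2‖q - p‖)`, and `a - b ≤ (a² - b²) / (2b)` for `b > 0` because the
concave square root lies below its tangent at `b²`.
-/

theorem sub_le_sq_sub_sq_div_two_mul {R : Type*} [Field R] [LinearOrder R] [IsStrictOrderedRing R]
    (a : R) {b : R} (hb : 0 < b) : a - b ≤ (a ^ 2 - b ^ 2) / (2 * b) := by
  rw [le_div_iff₀ (mul_pos two_pos hb)]
  linarith [two_mul_le_add_sq a b]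

section ConeProjection

variable {R E : Type*} [CommRing R] [AddCommGroup E] [Module R E] {B : LinearMap.BilinForm R E}

theorem apply_sub_self_of_apply_sub_eq_zero (hB : B.IsSymm) {q p : E} (horth : B (q - p) p = 0) :
    B (q - p) (q - p) = B q q - B p p := by
  have hqp : B q p = B p p := by
    rwa [LinearMap.BilinForm.sub_left, sub_eq_zero] at horth
  rw [LinearMap.BilinForm.sub_right, horth, sub_zero, LinearMap.BilinForm.sub_left, hB.eq p q, hqp]

variable [PartialOrder R] [IsOrderedRing R] {K : Set E} {q p : E}

theorem apply_sub_eq_zero_of_cone_projection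
    (hK : ∀ t : R, 0 ≤ t → ∀ x ∈ K, t • x ∈ K) (hp : p ∈ K)
    (hvar : ∀ y ∈ K, B (q - p) (y - p) ≤ 0) : B (q - p) p = 0 := by
  apply le_antisymm
  · have hdouble := hvar ((2 : R) • p) (hK 2 zero_le_two p hp)
    rwa [two_smul, add_sub_cancel_right] at hdouble
  · have hzero := hvar ((0 : R) • p) (hK 0 le_rfl p hp)
    rwa [zero_smul, zero_sub, LinearMap.BilinForm.neg_right, neg_nonpos] at hzero

theorem apply_sub_self_of_cone_projection (hB : B.IsSymm)
    (hK : ∀ t : R, 0 ≤ t → ∀ x ∈ K, t • x ∈ K) (hp : p ∈ K)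
    (hvar : ∀ y ∈ K, B (q - p) (y - p) ≤ 0) : B (q - p) (q - p) = B q q - B p p :=
  apply_sub_self_of_apply_sub_eq_zero hB (apply_sub_eq_zero_of_cone_projection hK hp hvar)

end ConeProjection

theorem stmt13_general {E : Type*} [AddCommGroup E] [Module ℝ E] {B : LinearMap.BilinForm ℝ E}
    (hB : B.IsPosSemidef) {K : Set E} (hK : ∀ t : ℝ, 0 ≤ t → ∀ x ∈ K, t • x ∈ K)
    {q q' p p' : E} (hp : p ∈ K) (hp' : p' ∈ K)
    (hvar : ∀ y ∈ K, B (q - p) (y - p) ≤ 0) (hvar' : ∀ y ∈ K, B (q' - p') (y - p') ≤ 0)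
    (hpos : 0 < B (q - p) (q - p)) :
    √(B (q' - p') (q' - p')) - √(B (q - p) (q - p))
      ≤ ((B q' q' - B q q) - (B p' p' - B p p)) / (2 * √(B (q - p) (q - p))) := by
  have hpyth := apply_sub_self_of_cone_projection hB.isSymm hK hp hvar
  have hpyth' := apply_sub_self_of_cone_projection hB.isSymm hK hp' hvar'
  have hnum : (B q' q' - B q q) - (B p' p' - B p p)
      = √(B (q' - p') (q' - p')) ^ 2 - √(B (q - p) (q - p)) ^ 2 := by
    rw [Real.sq_sqrt (hB.nonneg _), Real.sq_sqrt hpos.le, hpyth', hpyth, sub_sub_sub_comm]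
  rw [hnum]
  exact sub_le_sq_sub_sq_div_two_mul _ (Real.sqrt_pos.mpr hpos)

section WeightedForm

variable {n : ℕ} {c : Fin n → Fin n → ℝ}

/-- The weighted inner product `cinner c` bundled as a bilinear form, so that results about
bilinear forms apply to it; no sign condition on the weights is imposed. -/
def cinnerForm (c : Fin n → Fin n → ℝ) : LinearMap.BilinForm ℝ (Fin n → Fin n → ℝ) :=
  LinearMap.mk₂ ℝ (cinner c)
    (fun x y z => by simp only [cinner, Pi.add_apply, mul_add, add_mul, Finset.sum_add_distrib])
    (fun t x y => by
      simp only [cinner, Pi.smul_apply, smul_eq_mul, Finset.mul_sum, mul_assoc, mul_left_comm t])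
    (fun x y z => by simp only [cinner, Pi.add_apply, mul_add, Finset.sum_add_distrib])
    (fun t x y => by
      simp only [cinner, Pi.smul_apply, smul_eq_mul, Finset.mul_sum, mul_left_comm t])

theorem cinner_comm (x y : Fin n → Fin n → ℝ) : cinner c x y = cinner c y x := by
  simp only [cinner, mul_right_comm]

theorem cinner_self (x : Fin n → Fin n → ℝ) : cinner c x x = ∑ i, ∑ j, c i j * x i j ^ 2 := by
  simp only [cinner, mul_assoc, sq]

theorem cinner_self_nonneg (hc : ∀ i j, 0 ≤ c i j) (x : Fin n → Fin n → ℝ) :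
    0 ≤ cinner c x x := by
  rw [cinner_self]
  exact Finset.sum_nonneg fun i _ => Finset.sum_nonneg fun j _ =>
    mul_nonneg (hc i j) (sq_nonneg _)

theorem cinner_self_pos (hc : ∀ i j, 0 < c i j) {x : Fin n → Fin n → ℝ} (hx : x ≠ 0) :
    0 < cinner c x x := by
  have hterm (i j) : 0 ≤ c i j * x i j ^ 2 := mul_nonneg (hc i j).le (sq_nonneg _)
  obtain ⟨i, hi⟩ := Function.ne_iff.mp hx
  obtain ⟨j, hij⟩ := Function.ne_iff.mp hi
  rw [cinner_self]
  refine Finset.sum_pos' (fun i _ => Finset.sum_nonneg fun j _ => hterm i j)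
    ⟨i, Finset.mem_univ i, Finset.sum_pos' (fun j _ => hterm i j) ⟨j, Finset.mem_univ j, ?_⟩⟩
  exact mul_pos (hc i j) (sq_pos_of_ne_zero hij)

theorem cinnerForm_isPosSemidef (hc : ∀ i j, 0 ≤ c i j) : (cinnerForm c).IsPosSemidef where
  eq := cinner_comm
  nonneg := cinner_self_nonneg hc

theorem cnorm_sq (hc : ∀ i j, 0 ≤ c i j) (x : Fin n → Fin n → ℝ) :
    cnorm c x ^ 2 = cinner c x x :=
  Real.sq_sqrt (cinner_self_nonneg hc x)

theorem smul_mem_Kc (t : ℝ) (ht : 0 ≤ t) (x : Fin n → Fin n → ℝ) (hx : x ∈ Kc n c) :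
    t • x ∈ Kc n c := by
  obtain ⟨w, w', hw, hw', hx⟩ := hx
  refine ⟨t • w, t • w', fun i => mul_nonneg ht (hw i), fun j => mul_nonneg ht (hw' j),
    fun i j => ?_⟩
  simp only [Pi.smul_apply, smul_eq_mul, hx, mul_div_assoc', mul_add]

end WeightedForm

/-- if `p` and `p'` are the `c`-metric projections of `q` and `q'` onto `K_c`
(via the variational characterization) and `q ≠ p`, then
`‖q' − p'‖_c − ‖q − p‖_c ≤ [(‖q'‖_c² − ‖q‖_c²) − (‖p'‖_c² − ‖p‖_c²)] / (2‖q − p‖_c)`. -/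
theorem stmt13 {n : ℕ} (hn : 1 ≤ n) (c : Fin n → Fin n → ℝ) (hc : ∀ i j, 0 < c i j)
    (q q' p p' : Fin n → Fin n → ℝ) (hp : p ∈ Kc n c) (hp' : p' ∈ Kc n c)
    (hvar : ∀ y ∈ Kc n c, cinner c (q - p) (y - p) ≤ 0)
    (hvar' : ∀ y ∈ Kc n c, cinner c (q' - p') (y - p') ≤ 0)
    (hne : q ≠ p) :
    cnorm c (q' - p') - cnorm c (q - p)
      ≤ ((cnorm c q' ^ 2 - cnorm c q ^ 2) - (cnorm c p' ^ 2 - cnorm c p ^ 2))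
          / (2 * cnorm c (q - p)) := by
  simp only [cnorm_sq fun i j => (hc i j).le]
  exact stmt13_general (cinnerForm_isPosSemidef fun i j => (hc i j).le) smul_mem_Kc hp hp'
    hvar hvar' (cinner_self_pos hc (sub_ne_zero.mpr hne))
end

section
/- Let ν be a real n×n matrix with ν_{ij} > 0 for all i,j whose row sums and column sums all equal 1, and set ν^c_min := min_{i,j} ν_{ij}/c_{ij}. Let q be a nonzero real n×n matrix with ⟨q, y⟩_c ≤ 0 for all y ∈ K_c, and define r := ν + (ν^c_min/‖q‖_c)·q. Then Σ_j r_{ij} ≤ 1 for every i ∈ [n], Σ_i r_{ij} ≤ 1 for every j ∈ [n], and r_{ij} ≥ ν_{ij} − ν^c_min/√(c_{ij}) for all i,j. -/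
/-!
Pairing `q` with the generators of `K_c` attached to single rows and columns cancels the weights,
so every row and column sum of `q` is nonpositive, and adding a nonnegative multiple of `q` cannot
increase the marginals of `ν`. Entrywise, each single term of `⟨q, q⟩_c` is at most `‖q‖_c ^ 2`,
so `|q_{ij}| / ‖q‖_c ≤ 1 / √c_{ij}`.
-/

theorem sum_add_mul_le_sum {ι R : Type*} [Ring R] [PartialOrder R] [IsOrderedRing R]
    {s : Finset ι} {a : R} (f : ι → R) {g : ι → R} (ha : 0 ≤ a) (hg : ∑ i ∈ s, g i ≤ 0) :
    ∑ i ∈ s, (f i + a * g i) ≤ ∑ i ∈ s, f i := by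
  rw [Finset.sum_add_distrib, ← Finset.mul_sum]
  exact add_le_of_nonpos_right (mul_nonpos_of_nonneg_of_nonpos ha hg)

section WeightedInner

variable {n : ℕ} {c x : Fin n → Fin n → ℝ}

theorem cinner_div_weight (hc : ∀ i j, c i j ≠ 0) (x u : Fin n → Fin n → ℝ) :
    cinner c x (fun i j => u i j / c i j) = ∑ i, ∑ j, x i j * u i j := by
  refine Finset.sum_congr rfl fun i _ => Finset.sum_congr rfl fun j _ => ?_
  have := hc i j
  field_simp

theorem sum_mul_add_nonpos_of_cinner_nonpos (hc : ∀ i j, c i j ≠ 0)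
    (hx : ∀ y ∈ Kc n c, cinner c x y ≤ 0) {w wt : Fin n → ℝ} (hw : 0 ≤ w) (hwt : 0 ≤ wt) :
    ∑ i, ∑ j, x i j * (w i + wt j) ≤ 0 := by
  rw [← cinner_div_weight hc x fun i j => w i + wt j]
  exact hx _ ⟨w, wt, hw, hwt, fun _ _ => rfl⟩

theorem row_sum_nonpos_of_cinner_nonpos (hc : ∀ i j, c i j ≠ 0)
    (hx : ∀ y ∈ Kc n c, cinner c x y ≤ 0) (i : Fin n) : ∑ j, x i j ≤ 0 := by
  have h := sum_mul_add_nonpos_of_cinner_nonpos hc hx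
    (Pi.single_nonneg.mpr zero_le_one : 0 ≤ Pi.single i 1) le_rfl
  simpa [← Finset.sum_mul, Pi.single_apply] using h

theorem col_sum_nonpos_of_cinner_nonpos (hc : ∀ i j, c i j ≠ 0)
    (hx : ∀ y ∈ Kc n c, cinner c x y ≤ 0) (j : Fin n) : ∑ i, x i j ≤ 0 := by
  have h := sum_mul_add_nonpos_of_cinner_nonpos hc hx le_rfl
    (Pi.single_nonneg.mpr zero_le_one : 0 ≤ Pi.single j 1)
  simpa [Pi.single_apply] using h

theorem weight_mul_sq_le_cinner_self (hc : ∀ i j, 0 ≤ c i j) (x : Fin n → Fin n → ℝ)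
    (i j : Fin n) : c i j * x i j ^ 2 ≤ cinner c x x := by
  have term_nonneg (k l) : 0 ≤ c k l * x k l ^ 2 := mul_nonneg (hc k l) (sq_nonneg _)
  calc c i j * x i j ^ 2
      ≤ ∑ l, c i l * x i l ^ 2 :=
        Finset.single_le_sum (fun l _ => term_nonneg i l) (Finset.mem_univ j)
    _ ≤ ∑ k, ∑ l, c k l * x k l ^ 2 :=
        Finset.single_le_sum (f := fun k => ∑ l, c k l * x k l ^ 2)
          (fun k _ => Finset.sum_nonneg fun l _ => term_nonneg k l) (Finset.mem_univ i)
    _ = cinner c x x := by simp only [cinner, sq, mul_assoc]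

theorem sqrt_weight_mul_abs_le_cnorm (hc : ∀ i j, 0 ≤ c i j) (x : Fin n → Fin n → ℝ)
    (i j : Fin n) : √(c i j) * |x i j| ≤ cnorm c x := by
  rw [← Real.sqrt_sq_eq_abs, ← Real.sqrt_mul (hc i j)]
  exact Real.sqrt_le_sqrt (weight_mul_sq_le_cinner_self hc x i j)

theorem cnorm_pos (hc : ∀ i j, 0 < c i j) (hx : x ≠ 0) : 0 < cnorm c x := by
  obtain ⟨i, hi⟩ := Function.ne_iff.mp hx
  obtain ⟨j, hij⟩ := Function.ne_iff.mp hi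
  calc 0 < √(c i j) * |x i j| := mul_pos (Real.sqrt_pos.mpr (hc i j)) (abs_pos.mpr hij)
    _ ≤ cnorm c x := sqrt_weight_mul_abs_le_cnorm (fun k l => (hc k l).le) x i j

theorem abs_div_cnorm_le (hc : ∀ i j, 0 < c i j) (hx : x ≠ 0) (i j : Fin n) :
    |x i j| / cnorm c x ≤ 1 / √(c i j) := by
  rw [div_le_div_iff₀ (cnorm_pos hc hx) (Real.sqrt_pos.mpr (hc i j)), one_mul, mul_comm]
  exact sqrt_weight_mul_abs_le_cnorm (fun k l => (hc k l).le) x i j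

theorem sub_div_sqrt_weight_le_add_smul (hc : ∀ i j, 0 < c i j) (hx : x ≠ 0) {t : ℝ}
    (ht : 0 ≤ t) (ν : Fin n → Fin n → ℝ) (i j : Fin n) :
    ν i j - t / √(c i j) ≤ (ν + (t / cnorm c x) • x) i j := by
  have step_bound : -(t / cnorm c x * x i j) ≤ t / √(c i j) :=
    calc -(t / cnorm c x * x i j)
        = t * (-x i j / cnorm c x) := by ring
      _ ≤ t * (|x i j| / cnorm c x) := by
          gcongr
          · exact (cnorm_pos hc hx).le
          · exact neg_le_abs _
      _ ≤ t * (1 / √(c i j)) := mul_le_mul_of_nonneg_left (abs_div_cnorm_le hc hx i j) ht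
      _ = t / √(c i j) := mul_one_div _ _
  simp only [Pi.add_apply, Pi.smul_apply, smul_eq_mul]
  linarith

end WeightedInner

theorem stmt19_general {n : ℕ} {c : Fin n → Fin n → ℝ} (hc : ∀ i j, 0 < c i j)
    (ν : Fin n → Fin n → ℝ) {q : Fin n → Fin n → ℝ} (hq : q ≠ 0)
    (hqK : ∀ y ∈ Kc n c, cinner c q y ≤ 0) {t : ℝ} (ht : 0 ≤ t) :
    let r : Fin n → Fin n → ℝ := ν + (t / cnorm c q) • q
    (∀ i, ∑ j, r i j ≤ ∑ j, ν i j) ∧ (∀ j, ∑ i, r i j ≤ ∑ i, ν i j) ∧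
    ∀ i j, ν i j - t / √(c i j) ≤ r i j := by
  have hc₀ (i j) : c i j ≠ 0 := (hc i j).ne'
  have hstep : 0 ≤ t / cnorm c q := div_nonneg ht (cnorm_pos hc hq).le
  exact ⟨fun i => sum_add_mul_le_sum (ν i) hstep (row_sum_nonpos_of_cinner_nonpos hc₀ hqK i),
    fun j => sum_add_mul_le_sum (ν · j) hstep (col_sum_nonpos_of_cinner_nonpos hc₀ hqK j),
    sub_div_sqrt_weight_le_add_smul hc hq ht ν⟩

/-- for a positive doubly stochastic `ν`, `ν^c_min := min_{i,j} ν_{ij}/c_{ij}`,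
and a nonzero `q` with `⟨q, y⟩_c ≤ 0` for all `y ∈ K_c`, the matrix
`r := ν + (ν^c_min/‖q‖_c) q` has all row and column sums at most `1` and satisfies
`r_{ij} ≥ ν_{ij} − ν^c_min/√(c_{ij})` entrywise. -/
theorem stmt19 {n : ℕ} (hn : 1 ≤ n) (c : Fin n → Fin n → ℝ) (hc : ∀ i j, 0 < c i j)
    (ν : Fin n → Fin n → ℝ) (hν : ∀ i j, 0 < ν i j)
    (hνrow : ∀ i, ∑ j, ν i j = 1) (hνcol : ∀ j, ∑ i, ν i j = 1)
    (q : Fin n → Fin n → ℝ) (hq : q ≠ 0)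
    (hqK : ∀ y ∈ Kc n c, cinner c q y ≤ 0) :
    let νcmin : ℝ := ⨅ i, ⨅ j, ν i j / c i j
    let r : Fin n → Fin n → ℝ := ν + (νcmin / cnorm c q) • q
    (∀ i, ∑ j, r i j ≤ 1) ∧ (∀ j, ∑ i, r i j ≤ 1) ∧
    ∀ i j, ν i j - νcmin / Real.sqrt (c i j) ≤ r i j := by
  have νcmin_nonneg : 0 ≤ ⨅ i, ⨅ j, ν i j / c i j :=
    Real.iInf_nonneg fun i => Real.iInf_nonneg fun j => (div_pos (hν i j) (hc i j)).le
  simpa only [hνrow, hνcol] using stmt19_general hc ν hq hqK νcmin_nonneg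
end
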